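/- Assume (V; A) satisfies conditions (∗) and (∗∗), and let λ, μ ∈ K. Write mc_μ(V; A) = (V'; A') where V' = V^n/(𝔨 + 𝔩) (formed with parameter μ) and A'_i = mc_μ(A)_i. Then there exists a K-linear isomorphism T : mc_λ(V'; A') → mc_{λ+μ}(V; A) such that T ∘ mc_λ(A')_i = mc_{λ+μ}(A)_i ∘ T for every i ∈ {1, …, n}; moreover there exists a K-linear isomorphism S : mc_0(V; A) → V with S ∘ mc_0(A)_i = A_i ∘ S for every i. -/

import Mathlib

/-! Dettweiler–Reiter convolution and middle convolution, in linear-algebra form.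
`V^n` is modelled as `Fin n → V`. -/

/-- The Dettweiler–Reiter convolution endomorphism `c_λ(A)_i` of `V^n`, defined by
`(c_λ(A)_i w)_i = A_1 w_1 + ⋯ + A_n w_n + λ w_i` and `(c_λ(A)_i w)_k = 0` for `k ≠ i`. -/
noncomputable def cDR {K : Type*} [Field K] {V : Type*} [AddCommGroup V] [Module K V]
    {n : ℕ} (lam : K) (A : Fin n → Module.End K V) (i : Fin n) :
    Module.End K (Fin n → V) :=
  (LinearMap.single K (fun _ : Fin n => V) i).comp
    ((∑ j, (A j).comp (LinearMap.proj j)) + lam • LinearMap.proj i)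

/-- The subspace `𝔨 = {w ∈ V^n : A_i w_i = 0 for all i}`. -/
def kSub {K : Type*} [Field K] {V : Type*} [AddCommGroup V] [Module K V]
    {n : ℕ} (A : Fin n → Module.End K V) : Submodule K (Fin n → V) :=
  ⨅ i, LinearMap.ker ((A i).comp (LinearMap.proj i))

/-- The subspace `𝔩 = ⋂_{i=1}^n ker c_λ(A)_i`. -/
noncomputable def lSub {K : Type*} [Field K] {V : Type*} [AddCommGroup V] [Module K V]
    {n : ℕ} (lam : K) (A : Fin n → Module.End K V) : Submodule K (Fin n → V) :=
  ⨅ i, LinearMap.ker (cDR lam A i)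

/-- The underlying space `V^n/(𝔨 + 𝔩)` of the middle convolution `mc_λ(V; A)`. -/
noncomputable abbrev mcSpace {K : Type*} [Field K] {V : Type*} [AddCommGroup V] [Module K V]
    {n : ℕ} (lam : K) (A : Fin n → Module.End K V) :=
  (Fin n → V) ⧸ (kSub A ⊔ lSub lam A)

/-- `e` is the endomorphism `mc_λ(A)_i` of `V^n/(𝔨 + 𝔩)` induced by `c_λ(A)_i`,
characterised by `e ∘ mkQ = mkQ ∘ c_λ(A)_i`. -/
noncomputable def IsInducedEnd {K : Type*} [Field K] {V : Type*} [AddCommGroup V] [Module K V]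
    {n : ℕ} (lam : K) (A : Fin n → Module.End K V) (i : Fin n)
    (e : Module.End K (mcSpace lam A)) : Prop :=
  e.comp (kSub A ⊔ lSub lam A).mkQ = (kSub A ⊔ lSub lam A).mkQ.comp (cDR lam A i)
/-- Condition (∗): for every `i` and `τ ∈ K`,
`ker(A_i − τ·id_V) ∩ ⋂_{j ≠ i} ker A_j = {0}`. -/
def StarKer {K : Type*} [Field K] {V : Type*} [AddCommGroup V] [Module K V]
    {n : ℕ} (A : Fin n → Module.End K V) : Prop :=
  ∀ (i : Fin n) (τ : K),
    LinearMap.ker (A i - τ • (1 : Module.End K V)) ⊓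
      (⨅ j, ⨅ _ : j ≠ i, LinearMap.ker (A j)) = ⊥

/-- Condition (∗∗): for every `i` and `τ ∈ K`,
`range(A_i − τ·id_V) + Σ_{j ≠ i} range A_j = V`. -/
def StarIm {K : Type*} [Field K] {V : Type*} [AddCommGroup V] [Module K V]
    {n : ℕ} (A : Fin n → Module.End K V) : Prop :=
  ∀ (i : Fin n) (τ : K),
    LinearMap.range (A i - τ • (1 : Module.End K V)) ⊔
      (⨆ j, ⨆ _ : j ≠ i, LinearMap.range (A j)) = ⊤

/-!
Put `B = c_μ(A)` and `Φ w = B_1 w_1 + ⋯ + B_n w_n`, a map `(V^n)^n → V^n` that is surjective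
by (∗∗).  Since `c_μ(A)_i (w_i)` is the `i`-th component of `Φ w`, placed in the slot `i`, the map
`Φ` turns `c_λ(B)_i` into `c_{λ+μ}(A)_i`.  On the other hand, the quotient map `V^n → V'` applied to
each component is a surjection `P : (V^n)^n → V'^n` that turns `c_λ(B)_i` into `c_λ(A')_i`.
By (∗), `P` and `Φ` pull back the subspaces to be divided out in their targets to the same subspace
of `(V^n)^n`, so both quotients are the same quotient of `(V^n)^n`.  Similarly, for `λ = 0` the
map `w ↦ A_1 w_1 + ⋯ + A_n w_n` is a surjection `V^n → V` with kernel `𝔨 + 𝔩`.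
-/

open LinearMap

section LinearAlgebra

variable {R M N P : Type*} [Ring R] [AddCommGroup M] [Module R M] [AddCommGroup N] [Module R N]
  [AddCommGroup P] [Module R P]

theorem comap_sup_of_surjective {f : M →ₗ[R] N} (hf : Function.Surjective f)
    (p q : Submodule R N) : (p ⊔ q).comap f = p.comap f ⊔ q.comap f := by
  have hker : ker f ≤ p.comap f ⊔ q.comap f := le_sup_of_le_left (ker_le_comap f)
  calc (p ⊔ q).comap f = ((p.comap f ⊔ q.comap f).map f).comap f := by
        rw [Submodule.map_sup, Submodule.map_comap_eq_of_surjective hf,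
          Submodule.map_comap_eq_of_surjective hf]
    _ = p.comap f ⊔ q.comap f := by rw [Submodule.comap_map_eq, sup_eq_left.2 hker]

theorem exists_linearEquiv_comp_eq_of_ker_eq {f : M →ₗ[R] N} {g : M →ₗ[R] P}
    (hf : Function.Surjective f) (hg : Function.Surjective g) (h : ker f = ker g) :
    ∃ T : N ≃ₗ[R] P, T.toLinearMap ∘ₗ f = g := by
  refine ⟨(f.quotKerEquivOfSurjective hf).symm ≪≫ₗ Submodule.quotEquivOfEq _ _ h ≪≫ₗ
    g.quotKerEquivOfSurjective hg, LinearMap.ext fun m ↦ ?_⟩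
  have hm : (f.quotKerEquivOfSurjective hf).symm (f m) = Submodule.Quotient.mk m :=
    (LinearEquiv.symm_apply_eq _).2 rfl
  simp [hm]

theorem exists_linearEquiv_intertwining_of_ker_eq {f : M →ₗ[R] N} {g : M →ₗ[R] P}
    (hf : Function.Surjective f) (hg : Function.Surjective g) (h : ker f = ker g) :
    ∃ T : N ≃ₗ[R] P, ∀ (c : Module.End R M) (e : Module.End R N) (e' : Module.End R P),
      e ∘ₗ f = f ∘ₗ c → e' ∘ₗ g = g ∘ₗ c → T.toLinearMap ∘ₗ e = e' ∘ₗ T.toLinearMap := by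
  obtain ⟨T, hT⟩ := exists_linearEquiv_comp_eq_of_ker_eq hf hg h
  refine ⟨T, fun c e e' he he' ↦ (cancel_right hf).1 ?_⟩
  rw [comp_assoc, he, ← comp_assoc, hT, comp_assoc, hT, he']

end LinearAlgebra

section RowMap

variable {ι R M N M' N' : Type*} [Fintype ι] [DecidableEq ι] [Semiring R]
  [AddCommMonoid M] [Module R M] [AddCommMonoid N] [Module R N]
  [AddCommMonoid M'] [Module R M'] [AddCommMonoid N'] [Module R N']

/-- The row map `w ↦ A_1 w_1 + ⋯ + A_n w_n` of a tuple of linear maps. For a tuple `A` of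
endomorphisms of `V` it is the map `V^n → V` occurring in `c_λ(A)_i`; for the tuple `c_μ(A)`
of endomorphisms of `V^n` it is the map `(V^n)^n → V^n` behind the composition law. -/
def rowMap (A : ι → M →ₗ[R] N) : (ι → M) →ₗ[R] N :=
  LinearMap.lsum R (fun _ ↦ M) ℕ A

theorem rowMap_apply (A : ι → M →ₗ[R] N) (w : ι → M) : rowMap A w = ∑ j, A j (w j) := by
  simp [rowMap]

@[simp]
theorem rowMap_single (A : ι → M →ₗ[R] N) (i : ι) (x : M) :
    rowMap A (Pi.single i x) = A i x :=
  lsum_piSingle ..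

theorem range_le_range_rowMap (A : ι → M →ₗ[R] N) (i : ι) : range (A i) ≤ range (rowMap A) := by
  rintro _ ⟨x, rfl⟩
  exact ⟨Pi.single i x, rowMap_single A i x⟩

theorem surjective_rowMap {A : ι → M →ₗ[R] N} (h : ⨆ i, range (A i) = ⊤) :
    Function.Surjective (rowMap A) :=
  range_eq_top.1 <| top_le_iff.1 <| h.ge.trans <| iSup_le (range_le_range_rowMap A)

theorem rowMap_comp_compLeft {A : ι → M →ₗ[R] N} {A' : ι → M' →ₗ[R] N'} {f : M →ₗ[R] M'}
    {g : N →ₗ[R] N'} (h : ∀ i, A' i ∘ₗ f = g ∘ₗ A i) :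
    rowMap A' ∘ₗ f.compLeft ι = g ∘ₗ rowMap A := by
  refine LinearMap.ext fun w ↦ ?_
  simp only [comp_apply, rowMap_apply, map_sum]
  exact Finset.sum_congr rfl fun i _ ↦ LinearMap.congr_fun (h i) (w i)

end RowMap

section Convolution

variable {K V W : Type*} [Field K] [AddCommGroup V] [Module K V] [AddCommGroup W] [Module K W]
  {n : ℕ} {A : Fin n → Module.End K V} {lam mu : K}

theorem cDR_apply (lam : K) (A : Fin n → Module.End K V) (i : Fin n) (w : Fin n → V) :
    cDR lam A i w = Pi.single i (rowMap A w + lam • w i) := by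
  simp [cDR, rowMap_apply]

theorem mem_kSub {w : Fin n → V} : w ∈ kSub A ↔ ∀ i, A i (w i) = 0 := by
  simp [kSub]

theorem mem_lSub {w : Fin n → V} : w ∈ lSub lam A ↔ ∀ i, rowMap A w + lam • w i = 0 := by
  simp [lSub, cDR_apply]

theorem kSub_le_ker_rowMap (A : Fin n → Module.End K V) : kSub A ≤ ker (rowMap A) := fun w hw ↦ by
  simp [rowMap_apply, mem_kSub.1 hw]

theorem lSub_zero (A : Fin n → Module.End K V) : lSub 0 A = ker (rowMap A) := by
  ext w
  rcases isEmpty_or_nonempty (Fin n) with _ | _ <;> simp [mem_lSub, rowMap_apply]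

theorem kSub_sup_lSub_zero (A : Fin n → Module.End K V) :
    kSub A ⊔ lSub 0 A = ker (rowMap A) := by
  rw [lSub_zero, sup_eq_right.2 (kSub_le_ker_rowMap A)]

theorem rowMap_cDR_apply (mu : K) (A : Fin n → Module.End K V) (w : Fin n → Fin n → V)
    (i : Fin n) : rowMap (cDR mu A) w i = rowMap A (w i) + mu • w i i := by
  simp [rowMap_apply (cDR mu A), cDR_apply, Pi.single_apply]

theorem cDR_apply_eq_single_rowMap (mu : K) (A : Fin n → Module.End K V) (w : Fin n → Fin n → V)
    (i : Fin n) : cDR mu A i (w i) = Pi.single i (rowMap (cDR mu A) w i) := by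
  rw [cDR_apply, rowMap_cDR_apply]

theorem comp_rowMap_eq_rowMap_comp_cDR_zero (A : Fin n → Module.End K V) (i : Fin n) :
    A i ∘ₗ rowMap A = rowMap A ∘ₗ cDR 0 A i := by
  refine LinearMap.ext fun w ↦ ?_
  simp [cDR_apply]

theorem cDR_add_comp_rowMap_cDR (lam mu : K) (A : Fin n → Module.End K V) (i : Fin n) :
    cDR (lam + mu) A i ∘ₗ rowMap (cDR mu A) = rowMap (cDR mu A) ∘ₗ cDR lam (cDR mu A) i := by
  refine LinearMap.ext fun w ↦ ?_
  set y := rowMap (cDR mu A) w with hy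
  calc cDR (lam + mu) A i y
      = cDR mu A i y + lam • (Pi.single i (y i) : Fin n → V) := by
        rw [cDR_apply, cDR_apply, ← Pi.single_smul, ← Pi.single_add]
        congr 1
        module
    _ = cDR mu A i (y + lam • w i) := by
        rw [map_add, map_smul, cDR_apply_eq_single_rowMap mu A w, ← hy]
    _ = rowMap (cDR mu A) (cDR lam (cDR mu A) i w) := by
        rw [cDR_apply lam, rowMap_single]

theorem cDR_comp_compLeft {B : Fin n → Module.End K W} {f : V →ₗ[K] W}
    (h : ∀ i, B i ∘ₗ f = f ∘ₗ A i) (lam : K) (i : Fin n) :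
    cDR lam B i ∘ₗ f.compLeft (Fin n) = f.compLeft (Fin n) ∘ₗ cDR lam A i := by
  refine LinearMap.ext fun w ↦ funext fun j ↦ ?_
  have hrow : rowMap B (f.compLeft (Fin n) w) = f (rowMap A w) :=
    LinearMap.congr_fun (rowMap_comp_compLeft h) w
  rcases eq_or_ne j i with rfl | hj
  · simp [cDR_apply, hrow]
  · simp [cDR_apply, hj]

end Convolution

section Conditions

variable {K V : Type*} [Field K] [AddCommGroup V] [Module K V] {n : ℕ}
  {A : Fin n → Module.End K V} {mu : K}

/-- Condition (∗) at one fixed value of `τ`. At `τ = -μ` it controls which vectors supported in a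
single slot of `V^n` lie in `𝔨 + 𝔩`. -/
def StarKerAt (A : Fin n → Module.End K V) (τ : K) : Prop :=
  ∀ i, ker (A i - τ • (1 : Module.End K V)) ⊓ (⨅ j, ⨅ _ : j ≠ i, ker (A j)) = ⊥

/-- Condition (∗∗) at one fixed value of `τ`. At `τ = -μ` it says that each `c_μ(A)_i` maps onto
the `i`-th slot of `V^n`. -/
def StarImAt (A : Fin n → Module.End K V) (τ : K) : Prop :=
  ∀ i, range (A i - τ • (1 : Module.End K V)) ⊔ (⨆ j, ⨆ _ : j ≠ i, range (A j)) = ⊤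

theorem StarKer.starKerAt (h : StarKer A) (τ : K) : StarKerAt A τ := fun i ↦ h i τ

theorem StarIm.starImAt (h : StarIm A) (τ : K) : StarImAt A τ := fun i ↦ h i τ

theorem StarKerAt.iInf_ker_eq_bot (h : StarKerAt A 0) (i : Fin n) : ⨅ j, ker (A j) = ⊥ := by
  rw [iInf_split_single _ i, ← h i, zero_smul, sub_zero]

theorem StarImAt.iSup_range_eq_top (h : StarImAt A 0) (i : Fin n) : ⨆ j, range (A j) = ⊤ := by
  rw [iSup_split_single _ i, ← h i, zero_smul, sub_zero]

theorem StarKerAt.eq_zero {τ : K} (h : StarKerAt A τ) {i : Fin n} {x : V} (hi : A i x = τ • x)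
    (hj : ∀ j ≠ i, A j x = 0) : x = 0 := by
  rw [← Submodule.mem_bot K, ← h i]
  simpa [hi] using hj

theorem StarImAt.surjective_rowMap_add_smul_proj (h : StarImAt A (-mu)) (i : Fin n) :
    Function.Surjective (rowMap A + mu • (proj i : (Fin n → V) →ₗ[K] V)) := by
  rw [← range_eq_top, ← top_le_iff, ← h i]
  refine sup_le ?_ (iSup₂_le fun j hj ↦ ?_)
  · rintro _ ⟨x, rfl⟩
    exact ⟨Pi.single i x, by simp⟩
  · rintro _ ⟨x, rfl⟩
    exact ⟨Pi.single j x, by simp [hj.symm]⟩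

theorem StarImAt.surjective_rowMap_cDR (h : StarImAt A (-mu)) :
    Function.Surjective (rowMap (cDR mu A)) := fun y ↦ by
  choose w hw using fun i ↦ h.surjective_rowMap_add_smul_proj i (y i)
  exact ⟨w, funext fun i ↦ (rowMap_cDR_apply mu A w i).trans (hw i)⟩

end Conditions

section KernelSum

variable {K V : Type*} [Field K] [AddCommGroup V] [Module K V] {n : ℕ}
  {A : Fin n → Module.End K V} {lam mu : K}

theorem apply_eq_zero_of_mem_kSub_sup_lSub {x : Fin n → V} (hx : x ∈ kSub A ⊔ lSub lam A)
    (i : Fin n) : A i (rowMap A x + lam • x i) = 0 := by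
  obtain ⟨k, hk, l, hl, rfl⟩ := Submodule.mem_sup.1 hx
  have hrow : rowMap A k = 0 := kSub_le_ker_rowMap A hk
  have hsum : rowMap A (k + l) + lam • (k + l) i = lam • k i := by
    rw [map_add, hrow, Pi.add_apply, smul_add, zero_add, add_left_comm, mem_lSub.1 hl i, add_zero]
  rw [hsum, map_smul, mem_kSub.1 hk i, smul_zero]

theorem mem_kSub_sup_lSub_iff (h : ⨅ i, ker (A i) = ⊥) {x : Fin n → V} :
    x ∈ kSub A ⊔ lSub lam A ↔ ∀ i, A i (rowMap A x + lam • x i) = 0 := by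
  refine ⟨apply_eq_zero_of_mem_kSub_sup_lSub, fun hx ↦ ?_⟩
  rcases eq_or_ne lam 0 with rfl | hlam
  · have hrow : rowMap A x ∈ ⨅ i, ker (A i) := by simpa using hx
    rw [h, Submodule.mem_bot] at hrow
    rwa [kSub_sup_lSub_zero, mem_ker]
  · let k : Fin n → V := fun i ↦ lam⁻¹ • (rowMap A x + lam • x i)
    have hk : k ∈ kSub A := mem_kSub.2 fun i ↦ by rw [map_smul, hx i, smul_zero]
    have hl : x - k ∈ lSub lam A := mem_lSub.2 fun i ↦ by
      have hrow : rowMap A k = 0 := kSub_le_ker_rowMap A hk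
      rw [map_sub, hrow, Pi.sub_apply, smul_sub, smul_inv_smul₀ hlam]
      abel
    exact Submodule.mem_sup.2 ⟨k, hk, x - k, hl, add_sub_cancel k x⟩

theorem StarKerAt.single_mem_kSub_sup_lSub_iff (h : StarKerAt A (-mu)) {i : Fin n} {v : V} :
    Pi.single i v ∈ kSub A ⊔ lSub mu A ↔ A i v = 0 := by
  constructor
  · intro hv
    have hA := apply_eq_zero_of_mem_kSub_sup_lSub hv
    refine h.eq_zero (i := i) ?_ fun j hj ↦ ?_
    · simpa [← eq_neg_iff_add_eq_zero] using hA i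
    · simpa [hj] using hA j
  · refine fun hv ↦ Submodule.mem_sup_left (mem_kSub.2 fun j ↦ ?_)
    rcases eq_or_ne j i with rfl | hj
    · simpa using hv
    · simp [hj]

end KernelSum

section Iteration

variable {K V : Type*} [Field K] [AddCommGroup V] [Module K V] {n : ℕ}
  {A : Fin n → Module.End K V} {lam mu : K}

/-- The quotient map `V^n → V^n/(𝔨 + 𝔩)` onto the middle convolution. -/
noncomputable abbrev mcMk (lam : K) (A : Fin n → Module.End K V) :
    (Fin n → V) →ₗ[K] mcSpace lam A :=
  (kSub A ⊔ lSub lam A).mkQ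

theorem mcMk_eq_zero_iff {w : Fin n → V} : mcMk lam A w = 0 ↔ w ∈ kSub A ⊔ lSub lam A :=
  Submodule.Quotient.mk_eq_zero _

theorem surjective_compLeft_mcMk (lam : K) (A : Fin n → Module.End K V) :
    Function.Surjective ((mcMk lam A).compLeft (Fin n)) :=
  (Submodule.mkQ_surjective _).comp_left

variable {A' : Fin n → Module.End K (mcSpace mu A)}

theorem comap_compLeft_kSub_eq (hA' : ∀ i, IsInducedEnd mu A i (A' i))
    (h : StarKerAt A (-mu)) :
    (kSub A').comap ((mcMk mu A).compLeft (Fin n)) = (kSub A).comap (rowMap (cDR mu A)) := by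
  ext w
  simp only [Submodule.mem_comap, mem_kSub]
  refine forall_congr' fun i ↦ ?_
  have hi : A' i (mcMk mu A (w i)) = mcMk mu A (cDR mu A i (w i)) :=
    LinearMap.congr_fun (hA' i) (w i)
  rw [compLeft_apply, Function.comp_apply, hi, mcMk_eq_zero_iff, cDR_apply_eq_single_rowMap,
    h.single_mem_kSub_sup_lSub_iff]

theorem mem_comap_compLeft_lSub_iff (hA' : ∀ i, IsInducedEnd mu A i (A' i))
    {w : Fin n → Fin n → V} :
    w ∈ (lSub lam A').comap ((mcMk mu A).compLeft (Fin n)) ↔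
      ∀ i, rowMap (cDR mu A) w + lam • w i ∈ kSub A ⊔ lSub mu A := by
  have hrow : rowMap A' ((mcMk mu A).compLeft (Fin n) w) = mcMk mu A (rowMap (cDR mu A) w) :=
    LinearMap.congr_fun (rowMap_comp_compLeft hA') w
  rw [Submodule.mem_comap, mem_lSub]
  refine forall_congr' fun i ↦ ?_
  rw [hrow, compLeft_apply, Function.comp_apply, ← map_smul, ← map_add, mcMk_eq_zero_iff]

theorem comap_compLeft_lSub_le (hA' : ∀ i, IsInducedEnd mu A i (A' i))
    (h : ⨅ i, ker (A i) = ⊥) :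
    (lSub lam A').comap ((mcMk mu A).compLeft (Fin n)) ≤
      (kSub A ⊔ lSub (lam + mu) A).comap (rowMap (cDR mu A)) := by
  intro w hw
  rw [Submodule.mem_comap, mem_kSub_sup_lSub_iff h]
  intro i
  set y := rowMap (cDR mu A) w
  have hy : y i = rowMap A (w i) + mu • w i i := rowMap_cDR_apply mu A w i
  have hrow : rowMap A (y + lam • w i) + mu • (y + lam • w i) i =
      rowMap A y + (lam + mu) • y i := by
    calc rowMap A (y + lam • w i) + mu • (y + lam • w i) i
        = rowMap A y + mu • y i + lam • (rowMap A (w i) + mu • w i i) := by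
          rw [map_add, map_smul, Pi.add_apply, Pi.smul_apply]
          module
      _ = rowMap A y + (lam + mu) • y i := by
          rw [← hy]
          module
  rw [← hrow]
  exact apply_eq_zero_of_mem_kSub_sup_lSub ((mem_comap_compLeft_lSub_iff hA').1 hw i) i

theorem rowMap_cDR_const_of_mem_lSub {y : Fin n → V} (hy : y ∈ lSub (lam + mu) A) :
    rowMap (cDR mu A) (fun _ ↦ y) = -lam • y := by
  funext i
  have hi : rowMap A y = -((lam + mu) • y i) := eq_neg_of_add_eq_zero_left (mem_lSub.1 hy i)
  rw [rowMap_cDR_apply, hi, Pi.smul_apply]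
  module

theorem comap_rowMap_cDR_lSub_le (hA' : ∀ i, IsInducedEnd mu A i (A' i)) :
    (lSub (lam + mu) A).comap (rowMap (cDR mu A)) ≤
      (kSub A).comap (rowMap (cDR mu A)) ⊔
        (lSub lam A').comap ((mcMk mu A).compLeft (Fin n)) := by
  intro w hw
  set y := rowMap (cDR mu A) w with hy
  rcases eq_or_ne lam 0 with rfl | hlam
  · refine Submodule.mem_sup_right ((mem_comap_compLeft_lSub_iff hA').2 fun i ↦ ?_)
    rw [zero_smul, add_zero]
    exact Submodule.mem_sup_right (by simpa [← hy] using hw)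
  · let c : Fin n → Fin n → V := -lam⁻¹ • fun _ ↦ y
    have hc : rowMap (cDR mu A) c = y := by
      rw [map_smul, rowMap_cDR_const_of_mem_lSub hw, smul_smul, neg_mul_neg,
        inv_mul_cancel₀ hlam, one_smul]
    have hcl : c ∈ (lSub lam A').comap ((mcMk mu A).compLeft (Fin n)) :=
      (mem_comap_compLeft_lSub_iff hA').2 fun i ↦ by
        have hci : y + lam • c i = 0 := by simp [c, smul_inv_smul₀ hlam]
        rw [hc, hci]
        exact Submodule.zero_mem _
    have hwc : w - c ∈ (kSub A).comap (rowMap (cDR mu A)) :=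
      ker_le_comap _ (by rw [mem_ker, map_sub, hc, sub_self])
    exact Submodule.mem_sup.2 ⟨w - c, hwc, c, hcl, sub_add_cancel w c⟩

theorem comap_compLeft_kSub_sup_lSub_eq (hA' : ∀ i, IsInducedEnd mu A i (A' i))
    (hker₀ : ⨅ i, ker (A i) = ⊥) (hker : StarKerAt A (-mu)) (him : StarImAt A (-mu)) :
    (kSub A' ⊔ lSub lam A').comap ((mcMk mu A).compLeft (Fin n)) =
      (kSub A ⊔ lSub (lam + mu) A).comap (rowMap (cDR mu A)) := by
  rw [comap_sup_of_surjective (surjective_compLeft_mcMk mu A), comap_compLeft_kSub_eq hA' hker]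
  refine le_antisymm
    (sup_le (Submodule.comap_mono le_sup_left) (comap_compLeft_lSub_le hA' hker₀)) ?_
  rw [comap_sup_of_surjective him.surjective_rowMap_cDR]
  exact sup_le le_sup_left (comap_rowMap_cDR_lSub_le hA')

end Iteration

section CompositionLaw

variable {K V : Type*} [Field K] [AddCommGroup V] [Module K V] {n : ℕ}
  {A : Fin n → Module.End K V}

theorem exists_mcSpace_mcSpace_equiv (hker₀ : ⨅ i, ker (A i) = ⊥) {mu : K}
    (hker : StarKerAt A (-mu)) (him : StarImAt A (-mu)) {A' : Fin n → Module.End K (mcSpace mu A)}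
    (hA' : ∀ i, IsInducedEnd mu A i (A' i)) (lam : K) :
    ∃ T : mcSpace lam A' ≃ₗ[K] mcSpace (lam + mu) A,
      ∀ (i : Fin n) (e : Module.End K (mcSpace lam A'))
        (e' : Module.End K (mcSpace (lam + mu) A)),
        IsInducedEnd lam A' i e → IsInducedEnd (lam + mu) A i e' →
          T.toLinearMap ∘ₗ e = e' ∘ₗ T.toLinearMap := by
  let p := mcMk lam A' ∘ₗ (mcMk mu A).compLeft (Fin n)
  let q := mcMk (lam + mu) A ∘ₗ rowMap (cDR mu A)
  have hp : Function.Surjective p :=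
    (Submodule.mkQ_surjective _).comp (surjective_compLeft_mcMk mu A)
  have hq : Function.Surjective q :=
    (Submodule.mkQ_surjective _).comp him.surjective_rowMap_cDR
  have hpq : ker p = ker q := by
    simpa only [p, q, ker_comp, Submodule.ker_mkQ] using
      comap_compLeft_kSub_sup_lSub_eq hA' hker₀ hker him
  obtain ⟨T, hT⟩ := exists_linearEquiv_intertwining_of_ker_eq hp hq hpq
  refine ⟨T, fun i e e' he he' ↦ hT (cDR lam (cDR mu A) i) e e' ?_ ?_⟩
  · rw [← comp_assoc, he, comp_assoc, cDR_comp_compLeft hA', comp_assoc]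
  · rw [← comp_assoc, he', comp_assoc, cDR_add_comp_rowMap_cDR, comp_assoc]

theorem exists_mcSpace_zero_equiv (him₀ : ⨆ i, range (A i) = ⊤) :
    ∃ S : mcSpace (0 : K) A ≃ₗ[K] V,
      ∀ (i : Fin n) (e : Module.End K (mcSpace (0 : K) A)),
        IsInducedEnd 0 A i e → S.toLinearMap ∘ₗ e = A i ∘ₗ S.toLinearMap := by
  obtain ⟨S, hS⟩ := exists_linearEquiv_intertwining_of_ker_eq
    (Submodule.mkQ_surjective (kSub A ⊔ lSub 0 A)) (surjective_rowMap him₀)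
    ((Submodule.ker_mkQ _).trans (kSub_sup_lSub_zero A))
  exact ⟨S, fun i e he ↦ hS _ e (A i) he (comp_rowMap_eq_rowMap_comp_cDR_zero A i)⟩

end CompositionLaw

theorem mc_composition_law_general
    {K : Type*} [Field K] {V : Type*} [AddCommGroup V] [Module K V] {n : ℕ}
    (A : Fin n → Module.End K V) (lam mu : K)
    (hker₀ : ⨅ i, ker (A i) = ⊥) (hker : StarKerAt A (-mu))
    (him₀ : ⨆ i, range (A i) = ⊤) (him : StarImAt A (-mu))
    (A' : Fin n → Module.End K (mcSpace mu A))
    (hA' : ∀ i, IsInducedEnd mu A i (A' i)) :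
    (∃ T : mcSpace lam A' ≃ₗ[K] mcSpace (lam + mu) A,
      ∀ (i : Fin n) (e : Module.End K (mcSpace lam A'))
        (e' : Module.End K (mcSpace (lam + mu) A)),
        IsInducedEnd lam A' i e → IsInducedEnd (lam + mu) A i e' →
          T.toLinearMap ∘ₗ e = e' ∘ₗ T.toLinearMap) ∧
    (∃ S : mcSpace (0 : K) A ≃ₗ[K] V,
      ∀ (i : Fin n) (e : Module.End K (mcSpace (0 : K) A)),
        IsInducedEnd 0 A i e → S.toLinearMap ∘ₗ e = A i ∘ₗ S.toLinearMap) :=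
  ⟨exists_mcSpace_mcSpace_equiv hker₀ hker him hA' lam, exists_mcSpace_zero_equiv him₀⟩

/-- **composition law.** Assume `(V; A)` satisfies (∗) and (∗∗), and let
`λ, μ ∈ K`.  Write `mc_μ(V; A) = (V'; A')`, where `V' = V^n/(𝔨 + 𝔩)` (formed with
parameter `μ`) and the `A'_i` are the induced endomorphisms. Then there is a `K`-linear
isomorphism `T : mc_λ(V'; A') ≃ mc_{λ+μ}(V; A)` intertwining `mc_λ(A')_i` with
`mc_{λ+μ}(A)_i`; moreover there is a `K`-linear isomorphism `S : mc_0(V; A) ≃ V` with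
`S ∘ mc_0(A)_i = A_i ∘ S` for every `i`. -/
theorem mc_composition_law
    {K : Type*} [Field K] {V : Type*} [AddCommGroup V] [Module K V] [FiniteDimensional K V]
    {n : ℕ} (hn : 1 ≤ n) (A : Fin n → Module.End K V)
    (hker : StarKer A) (him : StarIm A) (lam mu : K)
    (A' : Fin n → Module.End K (mcSpace mu A))
    (hA' : ∀ i, IsInducedEnd mu A i (A' i)) :
    (∃ T : mcSpace lam A' ≃ₗ[K] mcSpace (lam + mu) A,
      ∀ (i : Fin n) (e : Module.End K (mcSpace lam A'))
        (e' : Module.End K (mcSpace (lam + mu) A)),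
        IsInducedEnd lam A' i e → IsInducedEnd (lam + mu) A i e' →
          T.toLinearMap.comp e = e'.comp T.toLinearMap) ∧
    (∃ S : mcSpace (0 : K) A ≃ₗ[K] V,
      ∀ (i : Fin n) (e : Module.End K (mcSpace (0 : K) A)),
        IsInducedEnd 0 A i e → S.toLinearMap.comp e = (A i).comp S.toLinearMap) := by
  have hk : ⨅ i, ker (A i) = ⊥ := (hker.starKerAt 0).iInf_ker_eq_bot ⟨0, hn⟩
  have hr : ⨆ i, range (A i) = ⊤ := (him.starImAt 0).iSup_range_eq_top ⟨0, hn⟩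
  exact mc_composition_law_general A lam mu hk (hker.starKerAt _) hr (him.starImAt _) A' hA'
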